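/- Let f ∈ A₁(c). Then for every odd positive integer n and every x ∈ (−1,1), the n-th derivative of f at x satisfies f^{(n)}(x) ≥ 0. -/

import Mathlib

open Set Complex

noncomputable section

/-- The doubly-slit plane `ℂ(J)` for `J ⊆ ℝ`. -/
def CSlit (J : Set ℝ) : Set ℂ := {z : ℂ | z.im ≠ 0 ∨ z.re ∈ J}

/-- `ℂ₁ = ℂ((−1,1))`. -/
def C1 : Set ℂ := CSlit (Set.Ioo (-1 : ℝ) 1)

/-- The class `A₁(c)` of normalized Herglotz functions. -/
structure MemA1 (c₁ c₂ c₃ c₄ : ℝ) (f : ℂ → ℂ) : Prop where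
  holo : DifferentiableOn ℂ f C1
  maps : Set.MapsTo f C1 C1
  symm : ∀ z ∈ C1, f (starRingEnd ℂ z) = starRingEnd ℂ (f z)
  upper : ∀ z ∈ C1, 0 < z.im → 0 ≤ (f z).im
  lower : ∀ z ∈ C1, z.im < 0 → (f z).im ≤ 0
  val1 : f (c₁ : ℂ) = (c₃ : ℂ)
  val2 : f (c₂ : ℂ) = (c₄ : ℂ)

/-!
If `(x - r, x + r) ⊆ J`, then `φ w = x + r * 2w / (1 + w²)` maps the unit disc into `ℂ(J)` and
preserves the sign of imaginary parts, so `F = f ∘ φ` satisfies `Im w * Im F(w) ≥ 0` on the disc.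
Cauchy's formula in the coordinate `φ` gives, for `0 < ρ < 1` and up to a positive constant,
`i f⁽ᵐ⁺¹⁾(x) = ∮_{|w| = ρ} F(w) (1 - w²)(1 + w²)ᵐ / w^(m+2) dw`.
As `ρ → 1` the measure `(1 - w²)(1 + w²)ᵐ / w^(m+2) dw` tends to a positive multiple of
`sin θ cosᵐ θ dθ`, and for even `m` the product `Im F(e^{iθ}) sin θ cosᵐ θ` is nonnegative. Since
`F` need not extend to the unit circle, the kernel is dilated by `t > 1` and `t` tends to `1`.
-/

section CauchyFormulaInCoordinate

open Metric

variable {V U : Set ℂ} {u ψ φ g : ℂ → ℂ} {c : ℂ} {R : ℝ}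

lemma circleIntegral_mul_deriv_div_pow_succ (hV : IsOpen V) (hR : 0 ≤ R) (hRV : sphere c R ⊆ V)
    (hu : DifferentiableOn ℂ u V) (hψ : DifferentiableOn ℂ ψ V)
    (hψ0 : ∀ w ∈ sphere c R, ψ w ≠ 0) (n : ℕ) :
    (n + 1) * (∮ w in C(c, R), u w * deriv ψ w / ψ w ^ (n + 2)) =
      ∮ w in C(c, R), deriv u w / ψ w ^ (n + 1) := by
  have hu_cont := hu.continuousOn.mono hRV
  have hψ_cont := hψ.continuousOn.mono hRV
  have hu'_cont := (hu.deriv hV).continuousOn.mono hRV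
  have hψ'_cont := (hψ.deriv hV).continuousOn.mono hRV
  have int_left : CircleIntegrable
      (fun w => ((n : ℂ) + 1) * (u w * deriv ψ w / ψ w ^ (n + 2))) c R :=
    (continuousOn_const.mul ((hu_cont.mul hψ'_cont).div (hψ_cont.pow _)
      fun w hw => pow_ne_zero _ (hψ0 w hw))).circleIntegrable hR
  have int_right : CircleIntegrable (fun w => deriv u w / ψ w ^ (n + 1)) c R :=
    (hu'_cont.div (hψ_cont.pow _) fun w hw => pow_ne_zero _ (hψ0 w hw)).circleIntegrable hR
  rw [← circleIntegral.integral_const_mul, ← sub_eq_zero, ← neg_sub, neg_eq_zero,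
    ← circleIntegral.integral_sub int_right int_left]
  refine circleIntegral.integral_eq_zero_of_hasDerivWithinAt
    (f := fun w => u w / ψ w ^ (n + 1)) hR fun w hw => ?_
  have hVw : V ∈ nhds w := hV.mem_nhds (hRV hw)
  have hψw := hψ0 w hw
  refine (((hu.hasDerivAt hVw).div ((hψ.hasDerivAt hVw).pow (n + 1))
    (pow_ne_zero _ hψw)).congr_deriv ?_).hasDerivWithinAt
  simp only [Pi.pow_apply, Nat.add_sub_cancel]
  push_cast
  field_simp
  ring

lemma circleIntegral_mul_deriv_div_sub (hR : 0 < R) (hV : IsOpen V) (hRV : closedBall c R ⊆ V)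
    (hu : DifferentiableOn ℂ u V) (hφ : DifferentiableOn ℂ φ V) (hφ' : deriv φ c ≠ 0)
    (hφ_ne : ∀ w ∈ closedBall c R, w ≠ c → φ w ≠ φ c) :
    (∮ w in C(c, R), u w * deriv φ w / (φ w - φ c)) = 2 * Real.pi * I * u c := by
  have hc : c ∈ closedBall c R := mem_closedBall_self hR.le
  have hslope : DifferentiableOn ℂ (dslope φ c) V :=
    (differentiableOn_dslope (hV.mem_nhds (hRV hc))).2 hφ
  have hslope_ne : ∀ w ∈ closedBall c R, dslope φ c w ≠ 0 := by
    intro w hw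
    rcases eq_or_ne w c with rfl | hwc
    · rwa [dslope_same]
    · rw [dslope_of_ne _ hwc, slope_def_field]
      exact div_ne_zero (sub_ne_zero.2 (hφ_ne w hw hwc)) (sub_ne_zero.2 hwc)
  have hquot : DifferentiableOn ℂ (fun w => u w * deriv φ w / dslope φ c w) (closedBall c R) :=
    ((hu.mul (hφ.deriv hV)).mono hRV).div (hslope.mono hRV) hslope_ne
  have hcauchy := hquot.circleIntegral_sub_inv_smul (mem_ball_self hR)
  rw [dslope_same, mul_div_cancel_right₀ _ hφ', smul_eq_mul] at hcauchy
  rw [← hcauchy]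
  refine circleIntegral.integral_congr hR.le fun w hw => ?_
  have hwc : w ≠ c := ne_of_mem_sphere hw hR.ne'
  have hsub : φ w - φ c = (w - c) * dslope φ c w := (sub_smul_dslope φ c w).symm
  simp only [hsub, smul_eq_mul]
  field_simp [sub_ne_zero.2 hwc]

/-- Integrating by parts trades one power of the denominator for one derivative of `g`. -/
lemma circleIntegral_comp_mul_deriv_div_pow (hR : 0 < R) (hV : IsOpen V)
    (hRV : closedBall c R ⊆ V) (hU : IsOpen U) (hφ : DifferentiableOn ℂ φ V)
    (hφU : MapsTo φ V U) (hφ' : deriv φ c ≠ 0)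
    (hφ_ne : ∀ w ∈ closedBall c R, w ≠ c → φ w ≠ φ c) (hg : DifferentiableOn ℂ g U) (n : ℕ) :
    (∮ w in C(c, R), g (φ w) * deriv φ w / (φ w - φ c) ^ (n + 1)) =
      2 * Real.pi * I / n.factorial * iteratedDeriv n g (φ c) := by
  induction n generalizing g with
  | zero =>
    simpa using circleIntegral_mul_deriv_div_sub hR hV hRV (hg.comp hφ hφU) hφ hφ' hφ_ne
  | succ n ih =>
    have hparts := circleIntegral_mul_deriv_div_pow_succ hV hR.le
      (sphere_subset_closedBall.trans hRV) (hg.comp hφ hφU) (hφ.sub_const (φ c))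
      (fun w hw => sub_ne_zero.2
        (hφ_ne w (sphere_subset_closedBall hw) (ne_of_mem_sphere hw hR.ne'))) n
    have hchain : ∀ w ∈ sphere c R, deriv (g ∘ φ) w = deriv g (φ w) * deriv φ w := by
      intro w hw
      have hw : w ∈ V := hRV (sphere_subset_closedBall hw)
      exact deriv_comp w (hg.differentiableAt (hU.mem_nhds (hφU hw)))
        (hφ.differentiableAt (hV.mem_nhds hw))
    have hstep : (∮ w in C(c, R), deriv (g ∘ φ) w / (φ w - φ c) ^ (n + 1)) =
        2 * Real.pi * I / n.factorial * iteratedDeriv (n + 1) g (φ c) := by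
      rw [iteratedDeriv_succ', ← ih (hg.deriv hU)]
      exact circleIntegral.integral_congr hR.le fun w hw => by simp only [hchain w hw]
    simp only [deriv_sub_const, Function.comp_apply] at hparts
    have hn : (n : ℂ) + 1 ≠ 0 := by exact_mod_cast n.succ_ne_zero
    rw [← mul_right_inj' hn, hparts, hstep, Nat.factorial_succ]
    push_cast
    field_simp

end CauchyFormulaInCoordinate

lemma iteratedDeriv_re_ofReal_eq {f : ℂ → ℂ} {x : ℝ} (hf : AnalyticAt ℂ f x) (n : ℕ) :
    iteratedDeriv n (fun y : ℝ => (f y).re) x = (iteratedDeriv n f x).re := by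
  induction n generalizing f with
  | zero => simp only [iteratedDeriv_zero]
  | succ n ih =>
    have hderiv : deriv (fun y : ℝ => (f y).re) =ᶠ[nhds x] fun y => (deriv f y).re := by
      filter_upwards [continuous_ofReal.continuousAt.eventually hf.eventually_analyticAt]
        with y hy using hy.differentiableAt.hasDerivAt.real_of_complex.deriv
    rw [iteratedDeriv_succ', iteratedDeriv_succ', hderiv.iteratedDeriv_eq, ih hf.deriv]

section TypicallyReal

open Metric

variable {F : ℂ → ℂ} {m : ℕ}

/-- The dilated kernel `(1 - (tw)²)(1 + (tw)²)ᵐ / w^(m+2)`. At `t = 1` it is, up to a constant, the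
kernel `z'(w) / z(w)^(m+2)` extracting the Taylor coefficient of order `m + 1` in the variable
`z = 2w / (1 + w²)`; on the circle `|w| = 1/t` it becomes the real density `sin θ cosᵐ θ dθ`. -/
def slitKernel (m : ℕ) (t : ℝ) (w : ℂ) : ℂ :=
  (1 - (t * w) ^ 2) * (1 + (t * w) ^ 2) ^ m / w ^ (m + 2)

lemma circleMap_mul_I_mul_slitKernel (m : ℕ) {t : ℝ} (ht : t ≠ 0) (θ : ℝ) :
    circleMap 0 t⁻¹ θ * I * slitKernel m t (circleMap 0 t⁻¹ θ) =
      (((2 * t) ^ (m + 1) * (Real.sin θ * Real.cos θ ^ m) : ℝ) : ℂ) := by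
  have ht' : (t : ℂ) ≠ 0 := ofReal_ne_zero.2 ht
  set e : ℂ := exp (θ * I) with he
  have he0 : e ≠ 0 := exp_ne_zero _
  have he_eq : e = Real.cos θ + Real.sin θ * I := by simp [he, exp_mul_I]
  have hcircle : circleMap 0 t⁻¹ θ = (t : ℂ)⁻¹ * e := by simp [circleMap, he]
  have hpyth : (Real.sin θ : ℂ) ^ 2 + (Real.cos θ : ℂ) ^ 2 = 1 := by
    exact_mod_cast Real.sin_sq_add_cos_sq θ
  have hsin : 1 - e ^ 2 = -2 * I * Real.sin θ * e := by
    rw [he_eq]; linear_combination -hpyth + (Real.sin θ : ℂ) ^ 2 * I_sq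
  have hcos : 1 + e ^ 2 = 2 * Real.cos θ * e := by
    rw [he_eq]; linear_combination -hpyth + (Real.sin θ : ℂ) ^ 2 * I_sq
  rw [hcircle, slitKernel, mul_inv_cancel_left₀ ht', hsin, hcos]
  push_cast
  simp only [mul_pow, inv_pow]
  field_simp
  linear_combination (-2 * sin (θ : ℂ) * cos (θ : ℂ) ^ m * 2 ^ m * (t * e) ^ (m + 2)) * I_sq

lemma circleIntegral_mul_slitKernel (F : ℂ → ℂ) (m : ℕ) {t : ℝ} (ht : t ≠ 0) :
    (∮ w in C(0, t⁻¹), F w * slitKernel m t w) =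
      ∫ θ in (0 : ℝ)..2 * Real.pi, F (circleMap 0 t⁻¹ θ) *
        (((2 * t) ^ (m + 1) * (Real.sin θ * Real.cos θ ^ m) : ℝ) : ℂ) := by
  refine intervalIntegral.integral_congr fun θ _ => ?_
  simp only [← circleMap_mul_I_mul_slitKernel m ht, deriv_circleMap, smul_eq_mul]
  ring

lemma im_circleIntegral_mul_slitKernel_nonneg_of_sphere (hm : Even m) {t : ℝ} (ht : 0 < t)
    (hF : ContinuousOn F (sphere 0 t⁻¹)) (hsign : ∀ w ∈ sphere (0 : ℂ) t⁻¹, 0 ≤ w.im * (F w).im) :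
    0 ≤ (∮ w in C(0, t⁻¹), F w * slitKernel m t w).im := by
  have hsphere : ∀ θ, circleMap 0 t⁻¹ θ ∈ sphere (0 : ℂ) t⁻¹ :=
    circleMap_mem_sphere 0 (inv_pos.2 ht).le
  have hFc : Continuous fun θ => F (circleMap 0 t⁻¹ θ) :=
    hF.comp_continuous (continuous_circleMap 0 _) hsphere
  rw [circleIntegral_mul_slitKernel F m ht.ne', ← imCLM_apply,
    ← imCLM.intervalIntegral_comp_comm ((hFc.fun_mul (by fun_prop)).intervalIntegrable _ _)]
  refine intervalIntegral.integral_nonneg Real.two_pi_pos.le fun θ _ => ?_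
  have him : (circleMap 0 t⁻¹ θ).im = t⁻¹ * Real.sin θ := by simp [circleMap_zero_im]
  have hsin : 0 ≤ Real.sin θ * (F (circleMap 0 t⁻¹ θ)).im := by
    refine nonneg_of_mul_nonneg_right ?_ (inv_pos.2 ht)
    simpa only [him, mul_assoc] using hsign _ (hsphere θ)
  rw [imCLM_apply, im_mul_ofReal]
  calc 0 ≤ (2 * t) ^ (m + 1) * Real.cos θ ^ m * (Real.sin θ * (F (circleMap 0 t⁻¹ θ)).im) :=
        mul_nonneg (mul_nonneg (by positivity) (hm.pow_nonneg _)) hsin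
    _ = _ := by ring

lemma circleIntegral_mul_slitKernel_eq_of_le (hF : DifferentiableOn ℂ F (ball 0 1)) (m : ℕ)
    (t : ℝ) {ρ σ : ℝ} (hρ : 0 < ρ) (hρσ : ρ ≤ σ) (hσ : σ < 1) :
    (∮ w in C(0, σ), F w * slitKernel m t w) = ∮ w in C(0, ρ), F w * slitKernel m t w := by
  have hdiff : ∀ w ∈ closedBall (0 : ℂ) σ \ ball 0 ρ,
      DifferentiableAt ℂ (fun w => F w * slitKernel m t w) w := by
    rintro w ⟨hwσ, hwρ⟩
    have hw0 : w ≠ 0 := fun h => hwρ (h ▸ mem_ball_self hρ)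
    refine (hF.differentiableAt (isOpen_ball.mem_nhds (closedBall_subset_ball hσ hwσ))).mul ?_
    exact DifferentiableAt.fun_div (by fun_prop) (by fun_prop) (pow_ne_zero _ hw0)
  exact circleIntegral_eq_of_differentiable_on_annulus_off_countable hρ hρσ countable_empty
    (fun w hw => (hdiff w hw).continuousAt.continuousWithinAt)
    fun w hw => hdiff w ⟨ball_subset_closedBall hw.1.1, fun h => hw.1.2 (ball_subset_closedBall h)⟩

lemma continuous_circleIntegral_mul_slitKernel (m : ℕ) {ρ : ℝ} (hρ : 0 < ρ)
    (hF : ContinuousOn F (sphere 0 ρ)) :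
    Continuous fun t : ℝ => ∮ w in C(0, ρ), F w * slitKernel m t w := by
  have hFc : Continuous fun θ => F (circleMap 0 ρ θ) :=
    hF.comp_continuous (continuous_circleMap 0 ρ) (circleMap_mem_sphere 0 hρ.le)
  have hkernel : Continuous fun p : ℝ × ℝ => slitKernel m p.1 (circleMap 0 ρ p.2) :=
    Continuous.div (by fun_prop) (by fun_prop)
      fun p => pow_ne_zero _ (circleMap_ne_center hρ.ne')
  refine intervalIntegral.continuous_parametric_intervalIntegral_of_continuous' ?_ _ _
  simp only [deriv_circleMap, smul_eq_mul, Function.uncurry_def]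
  exact Continuous.mul (by fun_prop) ((hFc.comp continuous_snd).mul hkernel)

/-- For `t > 1` the circle can be moved out to radius `1/t < 1`, where the kernel has a sign;
then let `t → 1`. -/
lemma im_circleIntegral_mul_slitKernel_nonneg (hF : DifferentiableOn ℂ F (ball 0 1))
    (hsign : ∀ w ∈ ball (0 : ℂ) 1, 0 ≤ w.im * (F w).im) (hm : Even m) {ρ : ℝ} (hρ : 0 < ρ)
    (hρ1 : ρ < 1) : 0 ≤ (∮ w in C(0, ρ), F w * slitKernel m 1 w).im := by
  have hcont : Continuous fun t : ℝ => (∮ w in C(0, ρ), F w * slitKernel m t w).im :=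
    continuous_im.comp (continuous_circleIntegral_mul_slitKernel m hρ
      (hF.continuousOn.mono (sphere_subset_ball hρ1)))
  refine ge_of_tendsto (hcont.continuousAt.tendsto.mono_left
    (nhdsWithin_le_nhds (s := Ioi (1 : ℝ)))) ?_
  filter_upwards [Ioo_mem_nhdsGT (one_lt_inv₀ hρ |>.2 hρ1)] with t ht
  have ht0 : 0 < t := one_pos.trans ht.1
  have ht1 : t⁻¹ < 1 := inv_lt_one_of_one_lt₀ ht.1
  have hsub : sphere (0 : ℂ) t⁻¹ ⊆ ball 0 1 := sphere_subset_ball ht1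
  rw [← circleIntegral_mul_slitKernel_eq_of_le hF m t hρ
    ((le_inv_comm₀ hρ ht0).2 ht.2.le) ht1]
  exact im_circleIntegral_mul_slitKernel_nonneg_of_sphere hm ht0 (hF.continuousOn.mono hsub)
    fun w hw => hsign w (hsub hw)

end TypicallyReal

section SlitMap

open Metric

/-- The conformal map `w ↦ 2w / (1 + w²)` of the unit disc onto `ℂ₁`. -/
def slitMap (w : ℂ) : ℂ := 2 * w / (1 + w ^ 2)

variable {w : ℂ}

lemma one_add_sq_ne_zero_of_mem_ball (hw : w ∈ ball 0 1) : 1 + w ^ 2 ≠ 0 := by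
  intro h
  have hnorm : ‖w‖ ^ 2 = 1 := by rw [← norm_pow, eq_neg_of_add_eq_zero_right h]; simp
  exact (pow_lt_one₀ (norm_nonneg w) (mem_ball_zero_iff.1 hw) two_ne_zero).ne hnorm

lemma hasDerivAt_slitMap (hw : w ∈ ball 0 1) :
    HasDerivAt slitMap (2 * (1 - w ^ 2) / (1 + w ^ 2) ^ 2) w := by
  have hden := one_add_sq_ne_zero_of_mem_ball hw
  refine (((hasDerivAt_id w).const_mul 2).div ((hasDerivAt_pow 2 w).const_add 1)
    hden).congr_deriv ?_
  simp only [id_eq]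
  push_cast
  ring

lemma exists_pos_slitMap_im_eq_mul (hw : w ∈ ball 0 1) :
    ∃ k > 0, (slitMap w).im = k * w.im := by
  refine ⟨2 * (1 - normSq w) / normSq (1 + w ^ 2), div_pos ?_ ?_, ?_⟩
  · have hw1 : ‖w‖ ^ 2 < 1 := pow_lt_one₀ (norm_nonneg w) (mem_ball_zero_iff.1 hw) two_ne_zero
    rw [normSq_eq_norm_sq]
    linarith
  · exact normSq_pos.2 (one_add_sq_ne_zero_of_mem_ball hw)
  · rw [slitMap, div_im, normSq_apply w]
    simp only [pow_two, mul_re, mul_im, add_re, add_im, one_re, one_im, re_ofNat, im_ofNat]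
    ring

lemma slitMap_mem_C1 (hw : w ∈ ball 0 1) : slitMap w ∈ C1 := by
  rcases eq_or_ne w.im 0 with hre | him
  · obtain ⟨s, rfl⟩ : ∃ s : ℝ, (s : ℂ) = w := ⟨w.re, Complex.ext rfl hre.symm⟩
    have hs : |s| < 1 := by simpa using hw
    obtain ⟨hs₁, hs₂⟩ := abs_lt.1 hs
    have hreal : slitMap s = ((2 * s / (1 + s ^ 2) : ℝ) : ℂ) := by simp [slitMap]
    have hpos : 0 < 1 + s ^ 2 := by positivity
    right
    rw [hreal, ofReal_re, mem_Ioo, lt_div_iff₀ hpos, div_lt_iff₀ hpos]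
    constructor <;> nlinarith
  · obtain ⟨k, hk, hkim⟩ := exists_pos_slitMap_im_eq_mul hw
    exact Or.inl (hkim ▸ mul_ne_zero hk.ne' him)

lemma slitMap_ne_zero (hw : w ∈ ball 0 1) (hw0 : w ≠ 0) : slitMap w ≠ 0 :=
  div_ne_zero (mul_ne_zero two_ne_zero hw0) (one_add_sq_ne_zero_of_mem_ball hw)

lemma slitKernel_one_eq (hw : w ∈ ball 0 1) (hw0 : w ≠ 0) (m : ℕ) {r : ℂ} (hr : r ≠ 0) :
    slitKernel m 1 w = (2 * r) ^ (m + 1) *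
      (r * (2 * (1 - w ^ 2) / (1 + w ^ 2) ^ 2) / (r * slitMap w) ^ (m + 2)) := by
  have hden := one_add_sq_ne_zero_of_mem_ball hw
  simp only [slitKernel, slitMap, ofReal_one, one_mul, mul_pow, div_pow]
  field_simp
  ring

lemma circleIntegral_comp_slitMap_mul_slitKernel {U : Set ℂ} {f : ℂ → ℂ} {a r : ℂ} {ρ : ℝ}
    (hU : IsOpen U) (hf : DifferentiableOn ℂ f U) (hr : r ≠ 0)
    (hmaps : MapsTo (fun w => a + r * slitMap w) (ball 0 1) U) (hρ : 0 < ρ) (hρ1 : ρ < 1) (m : ℕ) :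
    (∮ w in C(0, ρ), f (a + r * slitMap w) * slitKernel m 1 w) =
      (2 * r) ^ (m + 1) * (2 * Real.pi * I / (m + 1).factorial * iteratedDeriv (m + 1) f a) := by
  set φ : ℂ → ℂ := fun w => a + r * slitMap w with hφ
  have hφ_deriv : ∀ w ∈ ball (0 : ℂ) 1,
      HasDerivAt φ (r * (2 * (1 - w ^ 2) / (1 + w ^ 2) ^ 2)) w :=
    fun w hw => ((hasDerivAt_slitMap hw).const_mul r).const_add a
  have hφ0 : φ 0 = a := by simp [hφ, slitMap]
  have hsub : closedBall (0 : ℂ) ρ ⊆ ball 0 1 := closedBall_subset_ball hρ1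
  have hcauchy := circleIntegral_comp_mul_deriv_div_pow hρ isOpen_ball hsub hU
    (fun w hw => (hφ_deriv w hw).differentiableAt.differentiableWithinAt) hmaps
    (by simpa [(hφ_deriv 0 (mem_ball_self one_pos)).deriv] using hr)
    (fun w hw hw0 => by
      rw [hφ0]
      simpa [hφ, hr] using slitMap_ne_zero (hsub hw) hw0) hf (m + 1)
  rw [hφ0] at hcauchy
  rw [← hcauchy, ← circleIntegral.integral_const_mul]
  refine circleIntegral.integral_congr hρ.le fun w hw => ?_
  have hw1 : w ∈ ball 0 1 := hsub (sphere_subset_closedBall hw)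
  simp only [slitKernel_one_eq hw1 (ne_of_mem_sphere hw hρ.ne') m hr, (hφ_deriv w hw1).deriv]
  simp only [hφ, add_sub_cancel_left]
  ring

lemma im_mul_im_comp_slitMap_nonneg {f : ℂ → ℂ} (hsign : ∀ z, 0 ≤ z.im * (f z).im) {x r : ℝ}
    (hr : 0 < r) (hw : w ∈ ball 0 1) : 0 ≤ w.im * (f (x + r * slitMap w)).im := by
  obtain ⟨k, hk, hkim⟩ := exists_pos_slitMap_im_eq_mul hw
  refine nonneg_of_mul_nonneg_right ?_ (mul_pos hr hk)
  simpa [hkim, mul_assoc] using hsign (x + r * slitMap w)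

end SlitMap

lemma im_mul_im_nonneg_of_memA1 {c₁ c₂ c₃ c₄ : ℝ} {f : ℂ → ℂ} (hf : MemA1 c₁ c₂ c₃ c₄ f) (z : ℂ) :
    0 ≤ z.im * (f z).im := by
  rcases lt_trichotomy z.im 0 with hneg | hzero | hpos
  · exact mul_nonneg_of_nonpos_of_nonpos hneg.le (hf.lower z (Or.inl hneg.ne) hneg)
  · simp [hzero]
  · exact mul_nonneg hpos.le (hf.upper z (Or.inl hpos.ne') hpos)

section SlitPlane

open Metric

variable {J : Set ℝ}

lemma isOpen_CSlit (hJ : IsOpen J) : IsOpen (CSlit J) :=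
  (isOpen_ne_fun continuous_im continuous_const).union (hJ.preimage continuous_re)

lemma add_mul_mem_CSlit_of_mem_C1 {x r : ℝ} (hr : 0 < r) (hJ : ball x r ⊆ J) {z : ℂ}
    (hz : z ∈ C1) : (x + r * z : ℂ) ∈ CSlit J := by
  rcases hz with him | ⟨hlt, hgt⟩
  · exact Or.inl (by simpa [hr.ne'] using him)
  · refine Or.inr (hJ ?_)
    rw [Real.ball_eq_Ioo]
    simp only [add_re, re_ofReal_mul, ofReal_re, mem_Ioo]
    constructor <;> nlinarith

theorem stmt9_general (hJ : IsOpen J) {f : ℂ → ℂ} (hf : DifferentiableOn ℂ f (CSlit J))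
    (hsign : ∀ z, 0 ≤ z.im * (f z).im) {n : ℕ} (hn : Odd n) {x : ℝ} (hx : x ∈ J) :
    0 ≤ iteratedDeriv n (fun y : ℝ => (f y).re) x := by
  obtain ⟨r, hr, hrJ⟩ := isOpen_iff.1 hJ x hx
  obtain ⟨m, hm, rfl⟩ : ∃ m, Even m ∧ n = m + 1 := by
    obtain ⟨k, rfl⟩ := hn
    exact ⟨2 * k, even_two_mul k, rfl⟩
  have hopen := isOpen_CSlit hJ
  have hmaps : MapsTo (fun w => (x + r * slitMap w : ℂ)) (ball 0 1) (CSlit J) :=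
    fun w hw => add_mul_mem_CSlit_of_mem_C1 hr hrJ (slitMap_mem_C1 hw)
  have hdiff : DifferentiableOn ℂ (fun w => f (x + r * slitMap w)) (ball 0 1) :=
    hf.comp (fun w hw => (((hasDerivAt_slitMap hw).const_mul _).const_add
      _).differentiableAt.differentiableWithinAt) hmaps
  have hnonneg := im_circleIntegral_mul_slitKernel_nonneg hdiff
    (fun w hw => im_mul_im_comp_slitMap_nonneg hsign hr hw) hm one_half_pos one_half_lt_one
  have hcoeff : (2 * r : ℂ) ^ (m + 1) * (2 * Real.pi * I / (m + 1).factorial *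
      iteratedDeriv (m + 1) f x) = (((2 * r) ^ (m + 1) * (2 * Real.pi / (m + 1).factorial) : ℝ) : ℂ)
        * (I * iteratedDeriv (m + 1) f x) := by
    push_cast
    ring
  rw [circleIntegral_comp_slitMap_mul_slitKernel hopen hf (ofReal_ne_zero.2 hr.ne') hmaps
    one_half_pos one_half_lt_one, hcoeff, im_ofReal_mul, I_mul_im] at hnonneg
  rw [iteratedDeriv_re_ofReal_eq (hf.analyticAt (hopen.mem_nhds (Or.inr hx)))]
  exact nonneg_of_mul_nonneg_right hnonneg (by positivity)

end SlitPlane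

theorem stmt9 (c₁ c₂ c₃ c₄ : ℝ)
    (h1 : -1 < c₁) (h12 : c₁ < c₂) (h2 : c₂ < 1)
    (h3 : -1 < c₃) (h34 : c₃ < c₄) (h4 : c₄ < 1)
    (f : ℂ → ℂ) (hf : MemA1 c₁ c₂ c₃ c₄ f) :
    ∀ n : ℕ, Odd n → 0 < n →
      ∀ x ∈ Set.Ioo (-1 : ℝ) 1,
        0 ≤ iteratedDeriv n (fun y : ℝ => (f y).re) x := by
  intro n hn _ x hx
  exact stmt9_general isOpen_Ioo hf.holo (im_mul_im_nonneg_of_memA1 hf) hn hx
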